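/- In the bounded-degree uniform attachment process with m ≥ 2, for every integer r > 2 there is a constant C such that almost surely, for all sufficiently large n, the number of cycles of length r in G_n is at most C·ln n. -/

import Mathlib

open MeasureTheory ProbabilityTheory Filter Topology
open scoped ENNReal

/-- The degree of a vertex in a simple graph on `ℕ` (the number of its neighbours). -/
noncomputable def graphDeg (g : SimpleGraph ℕ) (v : ℕ) : ℕ := (g.neighborSet v).ncard

/-- The complete graph on the vertex set `[m] = {1,…,m}`, viewed as a simple graph on `ℕ`. -/
def initGraph (m : ℕ) : SimpleGraph ℕ :=
  SimpleGraph.fromRel (fun a b => a ∈ Finset.Icc 1 m ∧ b ∈ Finset.Icc 1 m)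

/-- The graph obtained from `g` by joining the (new) vertex `v` to every vertex of `S`. -/
def attachStep (g : SimpleGraph ℕ) (v : ℕ) (S : Finset ℕ) : SimpleGraph ℕ :=
  g ⊔ SimpleGraph.fromRel (fun a b => a = v ∧ b ∈ S)

/-- The set of vertices of `[n] = {1,…,n}` whose degree in `g` is strictly less than `d`. -/
noncomputable def lowDegSet (d : ℕ) (g : SimpleGraph ℕ) (n : ℕ) : Finset ℕ :=
  (Finset.Icc 1 n).filter (fun v => graphDeg g v < d)

/-- `IsUAProcess m d μ G` says that `(G n)_{n ≥ m}` (as random graphs on `ℕ`, with `G n`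
supported on the vertex set `[n] = {1,…,n}`) is the bounded-degree uniform attachment
process: `G m` is the complete graph on `[m]`, and `G (n+1)` is obtained from `G n` by
joining the new vertex `n+1` to a uniformly chosen `m`-element subset of the set of
vertices of `G n` of degree less than `d`, conditionally on `G n` and independently of
the past (note that `G n` determines the whole past of the process). -/
def IsUAProcess (m d : ℕ) {Ω : Type*} [MeasurableSpace Ω] (μ : Measure Ω)
    (G : ℕ → Ω → SimpleGraph ℕ) : Prop :=
  (∀ n g, MeasurableSet {ω | G n ω = g}) ∧
  (∀ ω, G m ω = initGraph m) ∧
  (∀ n, m ≤ n → ∀ g : SimpleGraph ℕ, ∀ S : Finset ℕ,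
    S ⊆ lowDegSet d g n → S.card = m →
    μ ({ω | G (n + 1) ω = attachStep g (n + 1) S} ∩ {ω | G n ω = g})
      = μ {ω | G n ω = g} / (((lowDegSet d g n).card.choose m : ℝ≥0∞)))

/-- The number of cycles of length `r` in `g`: the number of subgraphs of `g` isomorphic to
the cycle graph on `r` vertices. -/
noncomputable def cycleCount (g : SimpleGraph ℕ) (r : ℕ) : ℕ :=
  {C : g.Subgraph | Nonempty (C.coe ≃g SimpleGraph.cycleGraph r)}.ncard

/-- The invariants of a graph that the process can reach at time `n`. -/
structure IsAttachable (m d n : ℕ) (g : SimpleGraph ℕ) : Prop where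
  mem_of_adj : ∀ a b, g.Adj a b → a ∈ Finset.Icc 1 n
  deg_le : ∀ v, graphDeg g v ≤ d
  deg_add_le : ∀ v ∈ Finset.Icc 1 n, graphDeg g v + v ≤ m + n
  sum_deg_le : ∑ v ∈ Finset.Icc 1 n, graphDeg g v ≤ 2 * m * n

lemma isAttachable_initGraph {m d : ℕ} (hd : 2 * m < d) :
    IsAttachable m d m (initGraph m) := by
  have hadj : ∀ a b, (initGraph m).Adj a b → a ∈ Finset.Icc 1 m := by
    intro a b h
    simp only [initGraph, SimpleGraph.fromRel_adj] at h
    tauto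
  have hdeg : ∀ v, graphDeg (initGraph m) v ≤ m := by
    intro v
    have hsub : (initGraph m).neighborSet v ⊆ (Finset.Icc 1 m : Finset ℕ) :=
      fun w hw => hadj w v (SimpleGraph.Adj.symm hw)
    have := Set.ncard_le_ncard hsub (Finset.finite_toSet _)
    rw [Set.ncard_coe_finset] at this
    simpa [graphDeg] using this
  refine ⟨hadj, fun v => (hdeg v).trans (by omega), ?_, ?_⟩
  · intro v hv
    have := hdeg v
    have := (Finset.mem_Icc.1 hv).2
    omega
  · calc ∑ v ∈ Finset.Icc 1 m, graphDeg (initGraph m) v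
        ≤ ∑ v ∈ Finset.Icc 1 m, m := Finset.sum_le_sum fun v _ => hdeg v
      _ ≤ 2 * m * m := by simp; nlinarith

lemma attachStep_adj {g : SimpleGraph ℕ} {v : ℕ} {S : Finset ℕ} {a b : ℕ} :
    (attachStep g v S).Adj a b ↔ g.Adj a b ∨ a ≠ b ∧ (a = v ∧ b ∈ S ∨ b = v ∧ a ∈ S) := by
  simp [attachStep, SimpleGraph.fromRel_adj]

namespace IsAttachable

variable {m d n : ℕ} {g : SimpleGraph ℕ} {S : Finset ℕ}

lemma not_adj_succ (hg : IsAttachable m d n g) (b : ℕ) : ¬ g.Adj (n + 1) b := fun h => by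
  have := (Finset.mem_Icc.1 (hg.mem_of_adj _ _ h)).2
  omega

lemma finite_neighborSet (hg : IsAttachable m d n g) (v : ℕ) : (g.neighborSet v).Finite :=
  (Finset.finite_toSet (Finset.Icc 1 n)).subset
    fun w hw => hg.mem_of_adj w v (SimpleGraph.Adj.symm hw)

lemma exists_neighbor_finset (hg : IsAttachable m d n g) (v : ℕ) :
    ∃ F : Finset ℕ, F.card ≤ d ∧ ∀ w, g.Adj v w → w ∈ F := by
  refine ⟨(hg.finite_neighborSet v).toFinset, ?_, fun w hw => by simpa using hw⟩
  rw [← Set.ncard_eq_toFinset_card _ (hg.finite_neighborSet v)]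
  exact hg.deg_le v

lemma neighborSet_attachStep_succ (hg : IsAttachable m d n g) (hS : S ⊆ lowDegSet d g n) :
    (attachStep g (n + 1) S).neighborSet (n + 1) = S := by
  ext w
  have hw : w ∈ S → n + 1 ≠ w := fun h => by
    have := (Finset.mem_Icc.1 (Finset.mem_filter.1 (hS h)).1).2
    omega
  simp only [SimpleGraph.mem_neighborSet, attachStep_adj, Finset.mem_coe]
  have := hg.not_adj_succ w
  grind

lemma graphDeg_attachStep_le (hg : IsAttachable m d n g) {v : ℕ} (hv : v ≠ n + 1) :
    graphDeg (attachStep g (n + 1) S) v ≤ graphDeg g v + if v ∈ S then 1 else 0 := by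
  unfold graphDeg
  split_ifs with hvS
  · refine le_trans (Set.ncard_le_ncard (t := insert (n + 1) (g.neighborSet v)) ?_
      ((hg.finite_neighborSet v).insert _)) (Set.ncard_insert_le _ _)
    intro w hw
    simp only [SimpleGraph.mem_neighborSet, attachStep_adj] at hw
    simp only [Set.mem_insert_iff, SimpleGraph.mem_neighborSet]
    tauto
  · refine Set.ncard_le_ncard ?_ (hg.finite_neighborSet v)
    intro w hw
    simp only [SimpleGraph.mem_neighborSet, attachStep_adj] at hw ⊢
    tauto

lemma attach (hg : IsAttachable m d n g) (hd : 2 * m < d) (hS : S ⊆ lowDegSet d g n)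
    (hcard : S.card = m) : IsAttachable m d (n + 1) (attachStep g (n + 1) S) := by
  have hSn : ∀ v ∈ S, v ∈ Finset.Icc 1 n := fun v hv => (Finset.mem_filter.1 (hS hv)).1
  have hnew : graphDeg (attachStep g (n + 1) S) (n + 1) = m := by
    rw [graphDeg, hg.neighborSet_attachStep_succ hS, Set.ncard_coe_finset, hcard]
  refine ⟨?_, ?_, ?_, ?_⟩
  · intro a b h
    rw [attachStep_adj] at h
    have h1 := hg.mem_of_adj a b
    have h2 := hSn a
    simp only [Finset.mem_Icc] at *
    rcases h with h | ⟨_, ⟨h, _⟩ | ⟨_, h⟩⟩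
    · have := h1 h; omega
    · omega
    · have := h2 h; omega
  · intro v
    rcases eq_or_ne v (n + 1) with rfl | hv
    · omega
    · have h1 := hg.graphDeg_attachStep_le (S := S) hv
      have h2 := hg.deg_le v
      split_ifs at h1 with hvS
      · have := (Finset.mem_filter.1 (hS hvS)).2
        omega
      · omega
  · intro v hv
    rcases eq_or_ne v (n + 1) with rfl | hvn
    · omega
    · have h1 := hg.graphDeg_attachStep_le (S := S) hvn
      have h2 := hg.deg_add_le v (by simp only [Finset.mem_Icc] at *; omega)
      split_ifs at h1 <;> omega
  · rw [Finset.sum_Icc_succ_top (by omega), hnew]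
    have h1 : ∑ v ∈ Finset.Icc 1 n, graphDeg (attachStep g (n + 1) S) v
        ≤ ∑ v ∈ Finset.Icc 1 n, (graphDeg g v + if v ∈ S then 1 else 0) := by
      refine Finset.sum_le_sum fun v hv => hg.graphDeg_attachStep_le ?_
      have := (Finset.mem_Icc.1 hv).2
      omega
    have h2 : ∑ v ∈ Finset.Icc 1 n, (if v ∈ S then 1 else 0) = m := by
      rw [← Finset.sum_filter, Finset.sum_const, smul_eq_mul, mul_one,
        Finset.filter_mem_eq_inter, Finset.inter_eq_right.2 hSn, hcard]
    rw [Finset.sum_add_distrib, h2] at h1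
    have := hg.sum_deg_le
    linarith

lemma le_card_lowDegSet (hg : IsAttachable m d n g) (hd : 2 * m < d) (hn : m ≤ n) :
    m ≤ (lowDegSet d g n).card := by
  have hsub : Finset.Icc (n - m + 1) n ⊆ lowDegSet d g n := by
    intro v hv
    rw [Finset.mem_Icc] at hv
    have hv' : v ∈ Finset.Icc 1 n := Finset.mem_Icc.2 ⟨by omega, hv.2⟩
    have := hg.deg_add_le v hv'
    exact Finset.mem_filter.2 ⟨hv', by omega⟩
  have := Finset.card_le_card hsub
  rw [Nat.card_Icc] at this
  omega

lemma le_mul_card_lowDegSet (hg : IsAttachable m d n g) (hd : 2 * m < d) :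
    n ≤ (2 * m + 1) * (lowDegSet d g n).card := by
  have hsplit := Finset.card_filter_add_card_filter_not (s := Finset.Icc 1 n)
    (fun v => graphDeg g v < d)
  rw [Nat.card_Icc, Nat.add_sub_cancel] at hsplit
  have hhigh : ((Finset.Icc 1 n).filter fun v => ¬ graphDeg g v < d).card * (2 * m + 1)
      ≤ ∑ v ∈ Finset.Icc 1 n, graphDeg g v := by
    rw [← smul_eq_mul, ← Finset.sum_const]
    refine le_trans (Finset.sum_le_sum fun v hv => ?_)
      (Finset.sum_le_sum_of_subset (Finset.filter_subset _ _))
    have := (Finset.mem_filter.1 hv).2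
    omega
  have := hg.sum_deg_le
  change ((lowDegSet d g n).card + _) = n at hsplit
  nlinarith

end IsAttachable

lemma exists_walk_end_finset {g : SimpleGraph ℕ} {d : ℕ}
    (hg : ∀ v, ∃ F : Finset ℕ, F.card ≤ d ∧ ∀ w, g.Adj v w → w ∈ F) (u k : ℕ) :
    ∃ T : Finset ℕ, T.card ≤ d ^ k ∧
      ∀ h : ℕ → ℕ, h 0 = u → (∀ j < k, g.Adj (h j) (h (j + 1))) → h k ∈ T := by
  choose F hF hmem using hg
  induction k with
  | zero => exact ⟨{u}, by simp, fun h h0 _ => by simp [h0]⟩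
  | succ k ih =>
    obtain ⟨T, hT, hwalk⟩ := ih
    refine ⟨T.biUnion F, ?_, fun h h0 hadj => ?_⟩
    · calc (T.biUnion F).card ≤ T.card * d :=
            Finset.card_biUnion_le_card_mul _ _ _ fun v _ => hF v
        _ ≤ d ^ (k + 1) := by rw [pow_succ]; gcongr
    · exact Finset.mem_biUnion.2 ⟨h k, hwalk h h0 fun j hj => hadj j (by omega),
        hmem _ _ (hadj k (by omega))⟩

lemma exists_closed_walk_of_cycle {g : SimpleGraph ℕ} {r : ℕ} (hr : 2 < r) {C : g.Subgraph}
    (hC : Nonempty (C.coe ≃g SimpleGraph.cycleGraph r)) {v : ℕ} (hv : v ∈ C.verts) :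
    ∃ h : ℕ → ℕ, h 0 = v ∧ h r = v ∧ (∀ j, C.Adj (h j) (h (j + 1))) ∧
      Set.InjOn h (Set.Iio r) ∧ ∀ w ∈ C.verts, ∃ j < r, h j = w := by
  obtain ⟨e⟩ := hC
  obtain ⟨k, rfl⟩ : ∃ k, r = k + 2 := ⟨r - 2, by omega⟩
  set i₀ := e ⟨v, hv⟩ with hi₀
  refine ⟨fun j => (e.symm (i₀ + (Fin.ofNat (k + 2) j)) : C.verts), ?_, ?_, ?_, ?_, ?_⟩
  · simp [hi₀]
  · simp [hi₀]
  · intro j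
    have hadj : (SimpleGraph.cycleGraph (k + 2)).Adj (i₀ + Fin.ofNat (k + 2) j)
        (i₀ + Fin.ofNat (k + 2) (j + 1)) := by
      rw [SimpleGraph.cycleGraph_adj]
      right
      rw [add_sub_add_left_eq_sub, sub_eq_iff_eq_add]
      ext
      simp [Fin.val_add, add_comm]
    exact (e.symm.map_adj_iff.2 hadj)
  · intro a ha b hb hab
    have := e.symm.injective (Subtype.ext hab)
    have := congrArg Fin.val (add_left_cancel this)
    simpa [Nat.mod_eq_of_lt (Set.mem_Iio.1 ha), Nat.mod_eq_of_lt (Set.mem_Iio.1 hb)] using this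
  · intro w hw
    refine ⟨(e ⟨w, hw⟩ - i₀ : Fin (k + 2)).val, Fin.isLt _, ?_⟩
    simp

lemma cycles_in_finset {g : SimpleGraph ℕ} (r : ℕ) (T : Finset ℕ) :
    {C : g.Subgraph | Nonempty (C.coe ≃g SimpleGraph.cycleGraph r) ∧ C.verts ⊆ T}.Finite ∧
    {C : g.Subgraph | Nonempty (C.coe ≃g SimpleGraph.cycleGraph r) ∧ C.verts ⊆ T}.ncard
      ≤ T.card ^ r := by
  classical
  set A := {C : g.Subgraph | Nonempty (C.coe ≃g SimpleGraph.cycleGraph r) ∧ C.verts ⊆ T}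
  let F : g.Subgraph → Fin r → ℕ := fun C =>
    if hC : Nonempty (C.coe ≃g SimpleGraph.cycleGraph r) then
      fun i => (hC.some.symm i : C.verts) else fun _ => 0
  have hF : ∀ C, ∀ hC : Nonempty (C.coe ≃g SimpleGraph.cycleGraph r),
      F C = fun i => ((hC.some.symm i : C.verts) : ℕ) := fun C hC => by simp only [F, dif_pos hC]
  have hverts : ∀ C ∈ A, C.verts = Set.range (F C) := by
    intro C hC
    rw [hF C hC.1]
    ext w
    constructor
    · intro hw
      exact ⟨hC.1.some ⟨w, hw⟩, by simp⟩
    · rintro ⟨i, rfl⟩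
      exact Subtype.coe_prop _
  have hadj : ∀ C ∈ A, ∀ a b, C.Adj a b ↔
      ∃ i j, (SimpleGraph.cycleGraph r).Adj i j ∧ F C i = a ∧ F C j = b := by
    intro C hC a b
    rw [hF C hC.1]
    constructor
    · intro h
      refine ⟨hC.1.some ⟨a, C.edge_vert h⟩, hC.1.some ⟨b, C.edge_vert h.symm⟩, ?_, by simp, by simp⟩
      exact hC.1.some.map_adj_iff.2 h
    · rintro ⟨i, j, hij, rfl, rfl⟩
      exact hC.1.some.symm.map_adj_iff.2 hij
  have hinj : Set.InjOn F A := by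
    intro C hC D hD hCD
    refine SimpleGraph.Subgraph.ext ?_ ?_
    · rw [hverts C hC, hverts D hD, hCD]
    · ext a b
      rw [hadj C hC, hadj D hD, hCD]
  have hmaps : Set.MapsTo F A (Fintype.piFinset fun _ : Fin r => T : Finset (Fin r → ℕ)) := by
    intro C hC
    rw [Finset.mem_coe, Fintype.mem_piFinset]
    intro i
    exact hC.2 ((hverts C hC) ▸ Set.mem_range_self i)
  refine ⟨Set.Finite.of_injOn hmaps hinj (Finset.finite_toSet _), ?_⟩
  have := Set.ncard_le_ncard_of_injOn F (fun C hC => hmaps hC) hinj (Finset.finite_toSet _)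
  rw [Set.ncard_coe_finset] at this
  simpa using this

/-- The part of a subgraph of `g'` whose edges belong to `g`, as a subgraph of `g`. -/
def restrictSubgraph {g' : SimpleGraph ℕ} (g : SimpleGraph ℕ) (C : g'.Subgraph) :
    g.Subgraph where
  verts := C.verts
  Adj a b := C.Adj a b ∧ g.Adj a b
  adj_sub h := h.2
  edge_vert h := C.edge_vert h.1
  symm := ⟨fun _ _ h => ⟨h.1.symm, h.2.symm⟩⟩

/-- A choice set `S` closes a cycle when some `r`-cycle passes through the vertex attached
to `S`. -/
def ClosesCycle (g : SimpleGraph ℕ) (v r : ℕ) (S : Finset ℕ) : Prop :=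
  ∃ C : (attachStep g v S).Subgraph,
    Nonempty (C.coe ≃g SimpleGraph.cycleGraph r) ∧ v ∈ C.verts

lemma exists_cycles_ball {g : SimpleGraph ℕ} {d r : ℕ} (hr : 2 < r) (hd : 0 < d)
    (hg : ∀ v, ∃ F : Finset ℕ, F.card ≤ d ∧ ∀ w, g.Adj v w → w ∈ F) (v : ℕ) :
    ∃ T : Finset ℕ, T.card ≤ r * d ^ r ∧ ∀ C : g.Subgraph,
      Nonempty (C.coe ≃g SimpleGraph.cycleGraph r) → v ∈ C.verts → C.verts ⊆ T := by
  choose T hT hwalk using fun k => exists_walk_end_finset hg v k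
  refine ⟨(Finset.range r).biUnion T, ?_, fun C hC hv w hw => ?_⟩
  · refine (Finset.card_biUnion_le_card_mul _ _ (d ^ r) fun k hk => ?_).trans (by simp)
    exact (hT k).trans (Nat.pow_le_pow_right hd (Finset.mem_range.1 hk).le)
  · obtain ⟨h, h0, -, hadj, -, hsurj⟩ := exists_closed_walk_of_cycle hr hC hv
    obtain ⟨j, hj, rfl⟩ := hsurj w hw
    exact Finset.mem_coe.2 (Finset.mem_biUnion.2
      ⟨j, Finset.mem_range.2 hj, hwalk j h h0 fun i _ => C.adj_sub (hadj i)⟩)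

namespace IsAttachable

variable {m d n : ℕ} {g : SimpleGraph ℕ} {S : Finset ℕ}

lemma finite_cycles (hg : IsAttachable m d n g) {r : ℕ} (hr : 2 < r) :
    {C : g.Subgraph | Nonempty (C.coe ≃g SimpleGraph.cycleGraph r)}.Finite := by
  refine (cycles_in_finset r (Finset.Icc 1 n)).1.subset fun C hC => ⟨hC, fun v hv => ?_⟩
  obtain ⟨h, rfl, -, hadj, -⟩ := exists_closed_walk_of_cycle hr hC hv
  exact hg.mem_of_adj _ _ (C.adj_sub (hadj 0))

lemma ncard_old_cycles_le (hg : IsAttachable m d n g) {r : ℕ} (hr : 2 < r) :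
    {C : (attachStep g (n + 1) S).Subgraph |
      Nonempty (C.coe ≃g SimpleGraph.cycleGraph r) ∧ n + 1 ∉ C.verts}.ncard
      ≤ cycleCount g r := by
  have hadj : ∀ C : (attachStep g (n + 1) S).Subgraph, n + 1 ∉ C.verts →
      ∀ a b, (restrictSubgraph g C).Adj a b ↔ C.Adj a b := by
    intro C hC a b
    refine ⟨fun h => h.1, fun h => ⟨h, ?_⟩⟩
    have ha : a ≠ n + 1 := fun e => hC (e ▸ C.edge_vert h)
    have hb : b ≠ n + 1 := fun e => hC (e ▸ C.edge_vert h.symm)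
    have := attachStep_adj.1 (C.adj_sub h)
    tauto
  refine Set.ncard_le_ncard_of_injOn (restrictSubgraph g) ?_ ?_ (hg.finite_cycles hr)
  · rintro C ⟨⟨e⟩, hC⟩
    let e' : (restrictSubgraph g C).coe ≃g C.coe :=
      { toEquiv := Equiv.refl _
        map_rel_iff' := fun {a b} => (hadj C hC a b).symm }
    exact ⟨e'.trans e⟩
  · rintro C ⟨-, hC⟩ D ⟨-, hD⟩ hCD
    refine SimpleGraph.Subgraph.ext
      (show (restrictSubgraph g C).verts = (restrictSubgraph g D).verts by rw [hCD]) ?_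
    ext a b
    rw [← hadj C hC, ← hadj D hD, hCD]

lemma cycleCount_attachStep_le (hg : IsAttachable m d n g) (hd : 2 * m < d)
    (hS : S ⊆ lowDegSet d g n) (hcard : S.card = m) {r : ℕ} (hr : 2 < r) :
    cycleCount (attachStep g (n + 1) S) r ≤ cycleCount g r + (r * d ^ r) ^ r := by
  obtain ⟨T, hT, hball⟩ := exists_cycles_ball hr (by omega)
    (hg.attach hd hS hcard).exists_neighbor_finset (n + 1)
  have hnew := cycles_in_finset (g := attachStep g (n + 1) S) r T
  have hfin := (hg.attach hd hS hcard).finite_cycles hr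
  calc cycleCount (attachStep g (n + 1) S) r
      ≤ ({C : (attachStep g (n + 1) S).Subgraph |
          Nonempty (C.coe ≃g SimpleGraph.cycleGraph r) ∧ n + 1 ∉ C.verts} ∪
        {C : (attachStep g (n + 1) S).Subgraph |
          Nonempty (C.coe ≃g SimpleGraph.cycleGraph r) ∧ C.verts ⊆ T}).ncard := by
        refine Set.ncard_le_ncard (fun C hC => ?_)
          ((hfin.subset fun C hC => hC.1).union hnew.1)
        by_cases hv : n + 1 ∈ C.verts
        · exact Or.inr ⟨hC, hball C hC hv⟩
        · exact Or.inl ⟨hC, hv⟩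
    _ ≤ _ := Set.ncard_union_le _ _
    _ ≤ cycleCount g r + (r * d ^ r) ^ r :=
        add_le_add (hg.ncard_old_cycles_le hr) (hnew.2.trans (Nat.pow_le_pow_left hT r))

lemma cycleCount_attachStep_le_of_not_closesCycle (hg : IsAttachable m d n g) {r : ℕ}
    (hr : 2 < r) (hS : ¬ ClosesCycle g (n + 1) r S) :
    cycleCount (attachStep g (n + 1) S) r ≤ cycleCount g r := by
  refine le_trans (le_of_eq ?_) (hg.ncard_old_cycles_le (S := S) hr)
  unfold cycleCount
  congr 1
  ext C
  exact ⟨fun hC => ⟨hC, fun hv => hS ⟨C, hC, hv⟩⟩, fun hC => hC.1⟩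

lemma exists_walk_of_closesCycle (hg : IsAttachable m d n g) {r : ℕ} (hr : 2 < r)
    (hS : ClosesCycle g (n + 1) r S) :
    ∃ h : ℕ → ℕ, h 0 ∈ S ∧ h (r - 2) ∈ S ∧ h 0 ≠ h (r - 2) ∧
      ∀ j < r - 2, g.Adj (h j) (h (j + 1)) := by
  obtain ⟨C, hC, hv⟩ := hS
  obtain ⟨h, h0, hlast, hadj, hinj, -⟩ := exists_closed_walk_of_cycle hr hC hv
  have hne : ∀ j, 0 < j → j < r → h j ≠ n + 1 := fun j hj hjr e => by
    have := hinj (Set.mem_Iio.2 hjr) (Set.mem_Iio.2 (by omega)) (e.trans h0.symm)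
    omega
  have hg' : ∀ j, (attachStep g (n + 1) S).Adj (h j) (h (j + 1)) := fun j => C.adj_sub (hadj j)
  refine ⟨fun j => h (j + 1), ?_, ?_, ?_, ?_⟩
  · have h1 := attachStep_adj.1 (hg' 0)
    rw [h0] at h1
    have h2 := hne 1 (by omega) (by omega)
    have h3 := hg.not_adj_succ (h (0 + 1))
    simp only [zero_add] at *
    tauto
  · have h1 := attachStep_adj.1 (hg' (r - 1))
    rw [show r - 1 + 1 = r by omega, hlast] at h1
    have h2 := hne (r - 1) (by omega) (by omega)
    have h3 : ¬ g.Adj (h (r - 1)) (n + 1) := fun h => hg.not_adj_succ _ h.symm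
    simp only [show r - 2 + 1 = r - 1 by omega]
    tauto
  · intro e
    have := hinj (Set.mem_Iio.2 (by omega)) (Set.mem_Iio.2 (by omega)) e
    omega
  · intro j hj
    have h1 := attachStep_adj.1 (hg' (j + 1))
    have h2 := hne (j + 1) (by omega) (by omega)
    have h3 := hne (j + 1 + 1) (by omega) (by omega)
    tauto

end IsAttachable

lemma card_powersetCard_filter_pair_le {A : Finset ℕ} {m u w : ℕ} (hu : u ∈ A) (hw : w ∈ A)
    (huw : u ≠ w) :
    ((A.powersetCard m).filter fun S => u ∈ S ∧ w ∈ S).card ≤ (A.card - 2).choose (m - 2) := by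
  have hpair : ∀ B : Finset ℕ, u ∈ B → w ∈ B → (B \ {u, w}).card = B.card - 2 := by
    intro B hu hw
    rw [Finset.card_sdiff_of_subset (by simp [Finset.insert_subset_iff, hu, hw]),
      Finset.card_pair huw]
  rw [← hpair A hu hw, ← Finset.card_powersetCard]
  refine Finset.card_le_card_of_injOn (fun S => S \ {u, w}) ?_ ?_
  · intro S hS
    simp only [Finset.coe_filter, Finset.mem_powersetCard, Set.mem_ofPred_eq] at hS
    refine Finset.mem_coe.2 (Finset.mem_powersetCard.2
      ⟨Finset.sdiff_subset_sdiff hS.1.1 subset_rfl, ?_⟩)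
    rw [hpair S hS.2.1 hS.2.2, hS.1.2]
  · intro S hS S' hS' e
    simp only [Finset.coe_filter, Set.mem_ofPred_eq] at hS hS'
    have hrec : ∀ B : Finset ℕ, u ∈ B → w ∈ B → B = B \ {u, w} ∪ {u, w} := fun B hu hw =>
      (Finset.sdiff_union_of_subset (by simp [Finset.insert_subset_iff, hu, hw])).symm
    rw [hrec S hS.2.1 hS.2.2, hrec S' hS'.2.1 hS'.2.2]
    exact congrArg (· ∪ {u, w}) e

lemma mul_choose_sub_two {L m : ℕ} (hm : 2 ≤ m) (hL : 2 ≤ L) :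
    L * (L - 1) * (L - 2).choose (m - 2) = L.choose m * (m * (m - 1)) := by
  obtain ⟨k, rfl⟩ : ∃ k, m = k + 2 := ⟨m - 2, by omega⟩
  obtain ⟨l, rfl⟩ : ∃ l, L = l + 2 := ⟨L - 2, by omega⟩
  have h1 := Nat.add_one_mul_choose_eq l k
  have h2 := Nat.add_one_mul_choose_eq (l + 1) (k + 1)
  simp only [Nat.add_sub_cancel, show ∀ x, x + 2 - 1 = x + 1 from fun x => by omega]
  calc (l + 2) * (l + 1) * l.choose k = (l + 2) * ((l + 1) * l.choose k) := by ring
    _ = ((l + 1 + 1) * (l + 1).choose (k + 1)) * (k + 1) := by rw [h1]; ring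
    _ = _ := by rw [h2]; ring

open Classical in
lemma IsAttachable.card_closesCycle_le {m d n : ℕ} {g : SimpleGraph ℕ}
    (hg : IsAttachable m d n g) (hm : 2 ≤ m) (hd : 2 * m < d) (hn : m ≤ n) {r : ℕ}
    (hr : 2 < r) :
    n * (((lowDegSet d g n).powersetCard m).filter (ClosesCycle g (n + 1) r)).card
      ≤ 2 * (2 * m + 1) * d ^ (r - 2) * (m * (m - 1)) * (lowDegSet d g n).card.choose m := by
  set A := lowDegSet d g n
  have hmL : m ≤ A.card := hg.le_card_lowDegSet hd hn
  have hnL : n ≤ (2 * m + 1) * A.card := hg.le_mul_card_lowDegSet hd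
  choose T hT hwalk using fun u => exists_walk_end_finset hg.exists_neighbor_finset u (r - 2)
  have hcount : ((A.powersetCard m).filter (ClosesCycle g (n + 1) r)).card
      ≤ A.card * (d ^ (r - 2) * (A.card - 2).choose (m - 2)) := by
    have hsub : (A.powersetCard m).filter (ClosesCycle g (n + 1) r) ⊆
        A.biUnion fun u => ((T u).filter fun w => w ∈ A ∧ u ≠ w).biUnion fun w =>
          (A.powersetCard m).filter fun S => u ∈ S ∧ w ∈ S := by
      intro S hS
      obtain ⟨hSA, hcl⟩ := Finset.mem_filter.1 hS
      have hSsub := (Finset.mem_powersetCard.1 hSA).1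
      obtain ⟨h, h1, h2, h3, h4⟩ := hg.exists_walk_of_closesCycle hr hcl
      simp only [Finset.mem_biUnion, Finset.mem_filter]
      exact ⟨h 0, hSsub h1, h (r - 2), ⟨hwalk _ h rfl h4, hSsub h2, h3⟩, hSA, h1, h2⟩
    refine (Finset.card_le_card hsub).trans (Finset.card_biUnion_le_card_mul _ _ _ fun u hu => ?_)
    refine (Finset.card_biUnion_le_card_mul _ _ ((A.card - 2).choose (m - 2))
      fun w hw => ?_).trans ?_
    · obtain ⟨-, hwA, huw⟩ := Finset.mem_filter.1 hw
      exact card_powersetCard_filter_pair_le hu hwA huw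
    · exact Nat.mul_le_mul_right _ ((Finset.card_filter_le _ _).trans (hT u))
  have hn' : n ≤ 2 * (2 * m + 1) * (A.card - 1) := by
    obtain ⟨l, hl⟩ : ∃ l, A.card = l + 2 := ⟨A.card - 2, by omega⟩
    rw [hl] at hnL ⊢
    simp only [show l + 2 - 1 = l + 1 by omega]
    nlinarith
  calc _ ≤ (2 * (2 * m + 1) * (A.card - 1)) *
        (A.card * (d ^ (r - 2) * (A.card - 2).choose (m - 2))) := Nat.mul_le_mul hn' hcount
    _ = 2 * (2 * m + 1) * d ^ (r - 2) *
        (A.card * (A.card - 1) * (A.card - 2).choose (m - 2)) := by ring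
    _ = _ := by rw [mul_choose_sub_two hm (by omega)]; ring

/-- The exponent of the polynomial growth of the exponential moments of the cycle count. -/
def momentExponent (m d r : ℕ) : ℕ :=
  3 ^ ((r * d ^ r) ^ r) * (2 * (2 * m + 1) * d ^ (r - 2) * (m * (m - 1)))

lemma IsAttachable.sum_pow_cycleCount_le {m d n : ℕ} {g : SimpleGraph ℕ}
    (hg : IsAttachable m d n g) (hm : 2 ≤ m) (hd : 2 * m < d) (hn : m ≤ n) {r : ℕ}
    (hr : 2 < r) :
    n * ∑ S ∈ (lowDegSet d g n).powersetCard m, 3 ^ cycleCount (attachStep g (n + 1) S) r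
      ≤ (n + momentExponent m d r) *
        (3 ^ cycleCount g r * (lowDegSet d g n).card.choose m) := by
  classical
  set A := lowDegSet d g n
  set B := (r * d ^ r) ^ r with hB
  have hterm : ∀ S ∈ A.powersetCard m, 3 ^ cycleCount (attachStep g (n + 1) S) r ≤
      3 ^ cycleCount g r + if ClosesCycle g (n + 1) r S then 3 ^ cycleCount g r * 3 ^ B else 0 := by
    intro S hS
    obtain ⟨hSA, hcard⟩ := Finset.mem_powersetCard.1 hS
    split_ifs with hcl
    · rw [← pow_add]
      exact (Nat.pow_le_pow_right (by omega)
        (hg.cycleCount_attachStep_le hd hSA hcard hr)).trans (Nat.le_add_left _ _)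
    · exact Nat.pow_le_pow_right (by omega)
        (hg.cycleCount_attachStep_le_of_not_closesCycle hr hcl)
  have hsum := Finset.sum_le_sum hterm
  rw [Finset.sum_add_distrib, Finset.sum_const, Finset.card_powersetCard, ← Finset.sum_filter,
    Finset.sum_const, smul_eq_mul, smul_eq_mul] at hsum
  have hbad := hg.card_closesCycle_le hm hd hn hr
  calc _ ≤ n * _ := Nat.mul_le_mul_left n hsum
    _ = n * (A.card.choose m * 3 ^ cycleCount g r) + 3 ^ cycleCount g r * 3 ^ B *
        (n * ((A.powersetCard m).filter (ClosesCycle g (n + 1) r)).card) := by ring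
    _ ≤ n * (A.card.choose m * 3 ^ cycleCount g r) + 3 ^ cycleCount g r * 3 ^ B *
        (2 * (2 * m + 1) * d ^ (r - 2) * (m * (m - 1)) * A.card.choose m) := by gcongr
    _ = _ := by rw [momentExponent, ← hB]; ring

open Classical in
/-- The graphs obtained from `g` in one step of the process at time `n`. -/
noncomputable def successors (m d n : ℕ) (g : SimpleGraph ℕ) : Finset (SimpleGraph ℕ) :=
  ((lowDegSet d g n).powersetCard m).image (attachStep g (n + 1))

open Classical in
/-- The graphs the process can reach after `k` steps. -/
noncomputable def reachable (m d : ℕ) : ℕ → Finset (SimpleGraph ℕ)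
  | 0 => {initGraph m}
  | k + 1 => (reachable m d k).biUnion (successors m d (m + k))

lemma isAttachable_of_mem_reachable {m d : ℕ} (hd : 2 * m < d) (k : ℕ) :
    ∀ g ∈ reachable m d k, IsAttachable m d (m + k) g := by
  classical
  induction k with
  | zero =>
    intro g hg
    rw [reachable, Finset.mem_singleton] at hg
    exact hg ▸ isAttachable_initGraph hd
  | succ k ih =>
    intro g hg
    rw [reachable, Finset.mem_biUnion] at hg
    obtain ⟨g₀, hg₀, hg⟩ := hg
    obtain ⟨S, hS, rfl⟩ := Finset.mem_image.1 hg
    obtain ⟨hSA, hcard⟩ := Finset.mem_powersetCard.1 hS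
    exact (ih g₀ hg₀).attach hd hSA hcard

lemma IsAttachable.injOn_attachStep {m d n : ℕ} {g : SimpleGraph ℕ}
    (hg : IsAttachable m d n g) :
    Set.InjOn (attachStep g (n + 1)) ((lowDegSet d g n).powersetCard m : Finset (Finset ℕ)) := by
  intro S hS S' hS' e
  have h1 := hg.neighborSet_attachStep_succ (Finset.mem_powersetCard.1 hS).1
  have h2 := hg.neighborSet_attachStep_succ (Finset.mem_powersetCard.1 hS').1
  rw [e, h2] at h1
  exact (Finset.coe_injective h1).symm

lemma add_mul_pow_le_mul_succ_pow (n K : ℕ) : (n + K) * n ^ K ≤ n * (n + 1) ^ K := by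
  induction K with
  | zero => simp
  | succ K ih =>
    calc (n + (K + 1)) * n ^ (K + 1) = (n * (n + K + 1)) * n ^ K := by ring
      _ ≤ ((n + 1) * (n + K)) * n ^ K := Nat.mul_le_mul_right _ (by nlinarith)
      _ = (n + 1) * ((n + K) * n ^ K) := by ring
      _ ≤ (n + 1) * (n * (n + 1) ^ K) := Nat.mul_le_mul_left _ ih
      _ = n * (n + 1) ^ (K + 1) := by ring

namespace IsUAProcess

variable {m d : ℕ} {Ω : Type*} [MeasurableSpace Ω] {μ : Measure Ω}
  {G : ℕ → Ω → SimpleGraph ℕ}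

lemma measure_successor (hG : IsUAProcess m d μ G) {n : ℕ} (hn : m ≤ n) {g g' : SimpleGraph ℕ}
    (hg' : g' ∈ successors m d n g) :
    μ ({ω | G (n + 1) ω = g'} ∩ {ω | G n ω = g})
      = μ {ω | G n ω = g} / ((lowDegSet d g n).card.choose m : ℝ≥0∞) := by
  classical
  obtain ⟨S, hS, rfl⟩ := Finset.mem_image.1 hg'
  obtain ⟨hSA, hcard⟩ := Finset.mem_powersetCard.1 hS
  exact hG.2.2 n hn g S hSA hcard

lemma measure_not_successor [IsProbabilityMeasure μ] (hG : IsUAProcess m d μ G)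
    (hd : 2 * m < d) {n : ℕ} (hn : m ≤ n) {g : SimpleGraph ℕ} (hg : IsAttachable m d n g) :
    μ {ω | G n ω = g ∧ G (n + 1) ω ∉ successors m d n g} = 0 := by
  classical
  have hc0 : ((lowDegSet d g n).card.choose m : ℝ≥0∞) ≠ 0 := by
    exact_mod_cast (Nat.choose_pos (hg.le_card_lowDegSet hd hn)).ne'
  set U := ⋃ g' ∈ successors m d n g, ({ω | G (n + 1) ω = g'} ∩ {ω | G n ω = g}) with hU
  have hmeas : ∀ g' ∈ successors m d n g,
      MeasurableSet ({ω | G (n + 1) ω = g'} ∩ {ω | G n ω = g}) :=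
    fun g' _ => (hG.1 _ _).inter (hG.1 _ _)
  have hμU : μ U = μ {ω | G n ω = g} := by
    rw [hU, measure_biUnion_finset ?_ hmeas,
      Finset.sum_congr rfl fun g' hg' => hG.measure_successor hn hg', Finset.sum_const,
      successors, Finset.card_image_of_injOn hg.injOn_attachStep, Finset.card_powersetCard,
      nsmul_eq_mul, ENNReal.mul_div_cancel hc0 (ENNReal.natCast_ne_top _)]
    intro a _ b _ hab
    refine Set.disjoint_left.2 fun ω h1 h2 => hab ?_
    exact h1.1.symm.trans h2.1
  have hUm : MeasurableSet U := Finset.measurableSet_biUnion _ hmeas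
  have hUsub : U ⊆ {ω | G n ω = g} := Set.iUnion₂_subset fun _ _ => Set.inter_subset_right
  have hdiff : μ ({ω | G n ω = g} \ U) = 0 := by
    rw [measure_sdiff hUsub hUm.nullMeasurableSet (measure_ne_top _ _), hμU, tsub_self]
  refine measure_mono_null ?_ hdiff
  rintro ω ⟨h1, h2⟩
  refine ⟨h1, fun h => h2 ?_⟩
  obtain ⟨g', hg', h3⟩ := Set.mem_iUnion₂.1 h
  have h4 : G (n + 1) ω = g' := h3.1
  exact h4 ▸ hg'

lemma measure_not_reachable [IsProbabilityMeasure μ] (hG : IsUAProcess m d μ G)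
    (hd : 2 * m < d) (k : ℕ) : μ {ω | G (m + k) ω ∉ reachable m d k} = 0 := by
  classical
  induction k with
  | zero => simp [reachable, hG.2.1]
  | succ k ih =>
    have hnull : μ (⋃ g ∈ reachable m d k,
        {ω | G (m + k) ω = g ∧ G (m + k + 1) ω ∉ successors m d (m + k) g}) = 0 :=
      (measure_biUnion_null_iff (Finset.countable_toSet _)).2 fun g hg =>
        hG.measure_not_successor hd (by omega) (isAttachable_of_mem_reachable hd k g hg)
    refine measure_mono_null (fun ω hω => ?_) (measure_union_null ih hnull)
    by_cases h : G (m + k) ω ∈ reachable m d k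
    · refine Or.inr (Set.mem_iUnion₂.2 ⟨_, h, rfl, fun hs => hω ?_⟩)
      rw [reachable]
      exact Finset.mem_biUnion.2 ⟨_, h, hs⟩
    · exact Or.inl h

lemma measure_le_sum_reachable [IsProbabilityMeasure μ] (hG : IsUAProcess m d μ G)
    (hd : 2 * m < d) (k : ℕ) (s : Set Ω) :
    μ s ≤ ∑ g ∈ reachable m d k, μ (s ∩ {ω | G (m + k) ω = g}) := by
  calc μ s ≤ μ ((⋃ g ∈ reachable m d k, s ∩ {ω | G (m + k) ω = g}) ∪
          {ω | G (m + k) ω ∉ reachable m d k}) := by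
        refine measure_mono fun ω hω => ?_
        by_cases h : G (m + k) ω ∈ reachable m d k
        · exact Or.inl (Set.mem_iUnion₂.2 ⟨_, h, hω, rfl⟩)
        · exact Or.inr h
    _ ≤ _ := measure_union_le _ _
    _ ≤ _ := by
        rw [hG.measure_not_reachable hd k, add_zero]
        exact measure_biUnion_finset_le _ _

end IsUAProcess

/-- The expectation of `3 ^ X`, where `X` is the number of `r`-cycles after `k` steps. -/
noncomputable def cycleMoment (m d r : ℕ) {Ω : Type*} [MeasurableSpace Ω] (μ : Measure Ω)
    (G : ℕ → Ω → SimpleGraph ℕ) (k : ℕ) : ℝ≥0∞ :=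
  ∑ g ∈ reachable m d k, ((3 ^ cycleCount g r : ℕ) : ℝ≥0∞) * μ {ω | G (m + k) ω = g}

namespace IsUAProcess

variable {m d : ℕ} {Ω : Type*} [MeasurableSpace Ω] {μ : Measure Ω}
  {G : ℕ → Ω → SimpleGraph ℕ}

lemma cycleMoment_succ_le_sum [IsProbabilityMeasure μ] (hG : IsUAProcess m d μ G)
    (hd : 2 * m < d) (r k : ℕ) :
    cycleMoment m d r μ G (k + 1) ≤ ∑ g ∈ reachable m d k,
      ((∑ S ∈ (lowDegSet d g (m + k)).powersetCard m,
        3 ^ cycleCount (attachStep g (m + k + 1) S) r : ℕ) : ℝ≥0∞) *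
      (μ {ω | G (m + k) ω = g} / ((lowDegSet d g (m + k)).card.choose m : ℝ≥0∞)) := by
  classical
  calc cycleMoment m d r μ G (k + 1)
      ≤ ∑ g' ∈ reachable m d (k + 1), ((3 ^ cycleCount g' r : ℕ) : ℝ≥0∞) *
          ∑ g ∈ reachable m d k, μ ({ω | G (m + k + 1) ω = g'} ∩ {ω | G (m + k) ω = g}) :=
        Finset.sum_le_sum fun g' _ => by
          gcongr
          exact hG.measure_le_sum_reachable hd k _
    _ = ∑ g ∈ reachable m d k, ∑ g' ∈ reachable m d (k + 1), ((3 ^ cycleCount g' r : ℕ) : ℝ≥0∞) *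
          μ ({ω | G (m + k + 1) ω = g'} ∩ {ω | G (m + k) ω = g}) := by
        simp_rw [Finset.mul_sum]
        exact Finset.sum_comm
    _ ≤ _ := Finset.sum_le_sum fun g hg => by
        have hg' := isAttachable_of_mem_reachable hd k g hg
        have hsub : successors m d (m + k) g ⊆ reachable m d (k + 1) := by
          rw [reachable]
          exact Finset.subset_biUnion_of_mem _ hg
        rw [← Finset.sum_subset hsub]
        · rw [Finset.sum_congr rfl fun g' hs => by
              rw [hG.measure_successor (by omega) hs], ← Finset.sum_mul, successors,
            Finset.sum_image hg'.injOn_attachStep, Nat.cast_sum]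
        · intro g' _ hs
          rw [measure_mono_null ?_ (hG.measure_not_successor hd (by omega) hg'), mul_zero]
          rintro ω ⟨h1, h2⟩
          have h1' : G (m + k + 1) ω = g' := h1
          exact ⟨h2, h1' ▸ hs⟩

lemma mul_cycleMoment_succ_le [IsProbabilityMeasure μ] (hG : IsUAProcess m d μ G)
    (hm : 2 ≤ m) (hd : 2 * m < d) {r : ℕ} (hr : 2 < r) (k : ℕ) :
    ((m + k : ℕ) : ℝ≥0∞) * cycleMoment m d r μ G (k + 1)
      ≤ ((m + k + momentExponent m d r : ℕ) : ℝ≥0∞) * cycleMoment m d r μ G k := by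
  refine (mul_le_mul_right (hG.cycleMoment_succ_le_sum hd r k) _).trans ?_
  rw [cycleMoment, Finset.mul_sum, Finset.mul_sum]
  refine Finset.sum_le_sum fun g hg => ?_
  have hg' := isAttachable_of_mem_reachable hd k g hg
  have hc0 : ((lowDegSet d g (m + k)).card.choose m : ℝ≥0∞) ≠ 0 := by
    exact_mod_cast (Nat.choose_pos (hg'.le_card_lowDegSet hd (by omega))).ne'
  have hsum := hg'.sum_pow_cycleCount_le hm hd (by omega) hr
  rw [← mul_assoc, ← Nat.cast_mul]
  refine (mul_le_mul_left (Nat.cast_le.2 hsum) _).trans (le_of_eq ?_)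
  rw [Nat.cast_mul, Nat.cast_mul, mul_assoc, mul_assoc,
    ENNReal.mul_div_cancel hc0 (ENNReal.natCast_ne_top _)]

lemma cycleMoment_le [IsProbabilityMeasure μ] (hG : IsUAProcess m d μ G)
    (hm : 2 ≤ m) (hd : 2 * m < d) {r : ℕ} (hr : 2 < r) (k : ℕ) :
    cycleMoment m d r μ G k
      ≤ ((3 ^ cycleCount (initGraph m) r * (m + k) ^ momentExponent m d r : ℕ) : ℝ≥0∞) := by
  induction k with
  | zero =>
    rw [cycleMoment, reachable, Finset.sum_singleton, Nat.cast_mul]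
    gcongr
    exact prob_le_one.trans (by exact_mod_cast Nat.one_le_pow _ _ (by omega))
  | succ k ih =>
    have hn0 : ((m + k : ℕ) : ℝ≥0∞) ≠ 0 := by exact_mod_cast (by omega : m + k ≠ 0)
    rw [← ENNReal.mul_le_mul_iff_right hn0 (ENNReal.natCast_ne_top _)]
    refine (hG.mul_cycleMoment_succ_le hm hd hr k).trans ((mul_le_mul_right ih _).trans ?_)
    rw [← Nat.cast_mul, ← Nat.cast_mul, Nat.cast_le]
    have := add_mul_pow_le_mul_succ_pow (m + k) (momentExponent m d r)
    calc _ = 3 ^ cycleCount (initGraph m) r *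
          ((m + k + momentExponent m d r) * (m + k) ^ momentExponent m d r) := by ring
      _ ≤ 3 ^ cycleCount (initGraph m) r * ((m + k) * (m + k + 1) ^ momentExponent m d r) :=
          Nat.mul_le_mul_left _ this
      _ = _ := by rw [← add_assoc]; ring

lemma sq_mul_measure_le [IsProbabilityMeasure μ] (hG : IsUAProcess m d μ G)
    (hm : 2 ≤ m) (hd : 2 * m < d) {r : ℕ} (hr : 2 < r) (k : ℕ) :
    (((m + k) ^ 2 : ℕ) : ℝ≥0∞) *
      μ {ω | (m + k) ^ (momentExponent m d r + 2) < 3 ^ cycleCount (G (m + k) ω) r}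
      ≤ ((3 ^ cycleCount (initGraph m) r : ℕ) : ℝ≥0∞) := by
  set K := momentExponent m d r
  set s := {ω | (m + k) ^ (K + 2) < 3 ^ cycleCount (G (m + k) ω) r}
  have hmarkov : (((m + k) ^ (K + 2) : ℕ) : ℝ≥0∞) * μ s ≤ cycleMoment m d r μ G k := by
    refine (mul_le_mul_right (hG.measure_le_sum_reachable hd k s) _).trans ?_
    rw [Finset.mul_sum, cycleMoment]
    refine Finset.sum_le_sum fun g _ => ?_
    by_cases hbad : (m + k) ^ (K + 2) < 3 ^ cycleCount g r
    · gcongr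
      exact Set.inter_subset_right
    · have hempty : s ∩ {ω | G (m + k) ω = g} = ∅ := by
        refine Set.eq_empty_iff_forall_notMem.2 ?_
        rintro ω ⟨h1, h2⟩
        have h2' : G (m + k) ω = g := h2
        exact hbad (h2' ▸ h1)
      simp [hempty]
  have hn0 : (((m + k) ^ K : ℕ) : ℝ≥0∞) ≠ 0 := by
    exact_mod_cast (Nat.pow_pos (by omega : 0 < m + k)).ne'
  rw [← ENNReal.mul_le_mul_iff_right hn0 (ENNReal.natCast_ne_top _), ← mul_assoc,
    ← Nat.cast_mul, ← Nat.cast_mul, ← pow_add, mul_comm ((m + k) ^ K)]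
  exact hmarkov.trans (hG.cycleMoment_le hm hd hr k)

lemma ae_eventually_pow_cycleCount_le [IsProbabilityMeasure μ] (hG : IsUAProcess m d μ G)
    (hm : 2 ≤ m) (hd : 2 * m < d) {r : ℕ} (hr : 2 < r) :
    ∀ᵐ ω ∂μ, ∀ᶠ k : ℕ in atTop,
      3 ^ cycleCount (G (m + k) ω) r ≤ (m + k) ^ (momentExponent m d r + 2) := by
  have hsum : Summable fun k : ℕ =>
      (3 ^ cycleCount (initGraph m) r : ℝ) * (1 / ((k + 1 : ℕ) : ℝ) ^ 2) :=
    ((summable_nat_add_iff 1).2 (Real.summable_one_div_nat_pow.2 one_lt_two)).mul_left _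
  have hfin : ∑' k : ℕ, μ {ω | (m + k) ^ (momentExponent m d r + 2) <
      3 ^ cycleCount (G (m + k) ω) r} ≠ ∞ := by
    refine ne_top_of_le_ne_top hsum.tsum_ofReal_ne_top (ENNReal.tsum_le_tsum fun k => ?_)
    have hsq : (((k + 1) ^ 2 : ℕ) : ℝ≥0∞) ≤ (((m + k) ^ 2 : ℕ) : ℝ≥0∞) :=
      Nat.cast_le.2 (Nat.pow_le_pow_left (by omega) 2)
    have hle := (mul_le_mul_left hsq _).trans (hG.sq_mul_measure_le hm hd hr k)
    have hpos : (0 : ℝ) < ((k + 1 : ℕ) : ℝ) ^ 2 := by positivity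
    rw [mul_one_div, ENNReal.ofReal_div_of_pos hpos, ENNReal.le_div_iff_mul_le
      (Or.inl (ENNReal.ofReal_pos.2 hpos).ne') (Or.inl ENNReal.ofReal_ne_top), mul_comm]
    rw [← Nat.cast_pow, ENNReal.ofReal_natCast]
    refine hle.trans (le_of_eq ?_)
    rw [← ENNReal.ofReal_natCast]
    push_cast
    rfl
  filter_upwards [ae_eventually_notMem hfin] with ω hω
  filter_upwards [hω] with k hk
  exact not_lt.1 hk

end IsUAProcess

lemma cast_le_mul_log_of_pow_le {x n K : ℕ} (h : 3 ^ x ≤ n ^ K) :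
    (x : ℝ) ≤ K * Real.log n := by
  have h' : (3 : ℝ) ^ x ≤ (n : ℝ) ^ K := by exact_mod_cast h
  have hlog := Real.log_le_log (by positivity) h'
  rw [Real.log_pow, Real.log_pow] at hlog
  have h3 : (1 : ℝ) ≤ Real.log 3 := by
    rw [Real.le_log_iff_exp_le (by norm_num)]
    exact (Real.exp_one_lt_d9.trans (by norm_num)).le
  nlinarith [(Nat.cast_nonneg x : (0 : ℝ) ≤ x)]

/-- In the bounded-degree uniform attachment process with `m ≥ 2`, for every `r > 2` there
is a constant `C` such that almost surely the number of `r`-cycles in `G_n` is at most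
`C·ln n` for all sufficiently large `n`. -/
theorem uniform_attachment_cycle_upper_bound
    (m d : ℕ) (hm : 2 ≤ m) (hd : 2 * m < d)
    {Ω : Type*} [MeasurableSpace Ω] (μ : Measure Ω) [IsProbabilityMeasure μ]
    (G : ℕ → Ω → SimpleGraph ℕ) (hG : IsUAProcess m d μ G)
    (r : ℕ) (hr : 2 < r) :
    ∃ C : ℝ, ∀ᵐ ω ∂μ, ∀ᶠ n : ℕ in atTop,
      (cycleCount (G n ω) r : ℝ) ≤ C * Real.log n := by
  refine ⟨(momentExponent m d r + 2 : ℕ), ?_⟩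
  filter_upwards [hG.ae_eventually_pow_cycleCount_le hm hd hr] with ω hω
  obtain ⟨k₀, hk₀⟩ := eventually_atTop.1 hω
  filter_upwards [eventually_ge_atTop (m + k₀)] with n hn
  have h := hk₀ (n - m) (by omega)
  rw [show m + (n - m) = n by omega] at h
  exact cast_le_mul_log_of_pow_le h
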